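/- Let A ∈ O(Ω,H) be a POVM. Then a POVM B ∈ O(Λ,H) is compatible with A if and only if there exist POVMs R^(x) ∈ O(Λ,H), x ∈ Ω, such that B(y) = Σ_{x∈Ω} √A(x) R^(x)(y) √A(x) for all y ∈ Λ. -/

import Mathlib

open scoped Kronecker ComplexOrder MatrixOrder
open Matrix

noncomputable section

/-- Linear maps between matrix algebras, representing super-operators
`L(H) → L(K)` for finite-dimensional Hilbert spaces with index types `dH`, `dK`. -/
abbrev MatMap (dH dK : Type) : Type := Matrix dH dH ℂ →ₗ[ℂ] Matrix dK dK ℂ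

variable {Ω Λ dH dK dV dA dA' : Type}

/-- The Choi matrix of a super-operator. -/
def choiMatrix [DecidableEq dH] (Φ : MatMap dH dK) : Matrix (dH × dK) (dH × dK) ℂ :=
  fun p q => Φ (single p.1 q.1 1) p.2 q.2

/-- Complete positivity of a super-operator (positivity of its Choi matrix). -/
def IsCP [Fintype dH] [DecidableEq dH] [Fintype dK] (Φ : MatMap dH dK) : Prop :=
  (choiMatrix Φ).PosSemidef

/-- A quantum state: a positive semidefinite matrix of unit trace. -/
def IsState [Fintype dH] (ρ : Matrix dH dH ℂ) : Prop := ρ.PosSemidef ∧ ρ.trace = 1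

/-- Trace-nonincreasing super-operator. -/
def IsTNI [Fintype dH] [Fintype dK] (Φ : MatMap dH dK) : Prop :=
  ∀ ρ : Matrix dH dH ℂ, ρ.PosSemidef → (Φ ρ).trace ≤ ρ.trace

/-- Trace-preserving super-operator. -/
def IsTP [Fintype dH] [Fintype dK] (Φ : MatMap dH dK) : Prop :=
  ∀ ρ : Matrix dH dH ℂ, (Φ ρ).trace = ρ.trace

/-- A quantum instrument with outcome set `Ω` from system `dH` to system `dK`:
a family of completely positive trace-nonincreasing maps summing to a channel. -/
structure Instrument (Ω dH dK : Type) [Fintype Ω] [Fintype dH] [DecidableEq dH]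
    [Fintype dK] : Type where
  op : Ω → MatMap dH dK
  cp : ∀ x, IsCP (op x)
  tni : ∀ x, IsTNI (op x)
  tp : IsTP (∑ x, op x)

/-- A quantum channel: a completely positive trace-preserving super-operator. -/
structure Channel (dH dK : Type) [Fintype dH] [DecidableEq dH] [Fintype dK] : Type where
  map : MatMap dH dK
  cp : IsCP map
  tp : IsTP map

/-- A POVM with outcome set `Ω` on system `d`. -/
structure POVM (Ω d : Type) [Fintype Ω] [Fintype d] [DecidableEq d] : Type where
  elem : Ω → Matrix d d ℂ
  pos : ∀ x, (elem x).PosSemidef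
  sum_eq : ∑ x, elem x = 1

/-- The effect (induced POVM element) of an operation `Φ`:
the unique matrix `A` with `tr[A ρ] = tr[Φ ρ]` for all `ρ`. -/
def dualId [Fintype dH] [DecidableEq dH] [Fintype dK] (Φ : MatMap dH dK) :
    Matrix dH dH ℂ :=
  fun i j => (Φ (single j i 1)).trace

/-- Partial trace over the first tensor factor. -/
def ptraceL [Fintype dA] (M : Matrix (dA × dK) (dA × dK) ℂ) : Matrix dK dK ℂ :=
  fun i j => ∑ a, M (a, i) (a, j)

/-- Partial trace over the second tensor factor. -/
def ptraceR [Fintype dV] (M : Matrix (dK × dV) (dK × dV) ℂ) : Matrix dK dK ℂ :=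
  fun i j => ∑ b, M (i, b) (j, b)

/-- Compatibility of two instruments: existence of a joint instrument whose
partial-trace marginals (summed over the other outcome) reproduce both instruments
on all states. -/
def InsCompatible [Fintype Ω] [Fintype Λ] [Fintype dH] [DecidableEq dH] [Fintype dK]
    [Fintype dV] (I : Instrument Ω dH dK) (J : Instrument Λ dH dV) : Prop :=
  ∃ G : Instrument (Ω × Λ) dH (dK × dV),
    (∀ y, ∀ ρ : Matrix dH dH ℂ, IsState ρ → ∑ x, ptraceL (G.op (x, y) ρ) = J.op y ρ) ∧
    (∀ x, ∀ ρ : Matrix dH dH ℂ, IsState ρ → ∑ y, ptraceR (G.op (x, y) ρ) = I.op x ρ)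

/-- Compatibility of an instrument and a channel (a one-outcome instrument). -/
def InsChCompatible [Fintype Ω] [Fintype dH] [DecidableEq dH] [Fintype dK] [Fintype dV]
    (I : Instrument Ω dH dK) (Ψ : Channel dH dV) : Prop :=
  ∃ G : Instrument Ω dH (dK × dV),
    (∀ ρ : Matrix dH dH ℂ, IsState ρ → ∑ x, ptraceL (G.op x ρ) = Ψ.map ρ) ∧
    (∀ x, ∀ ρ : Matrix dH dH ℂ, IsState ρ → ptraceR (G.op x ρ) = I.op x ρ)

/-- Compatibility of two channels. -/
def ChCompatible [Fintype dH] [DecidableEq dH] [Fintype dK] [Fintype dV]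
    (Φ : Channel dH dK) (Ψ : Channel dH dV) : Prop :=
  ∃ Γ : Channel dH (dK × dV),
    (∀ ρ : Matrix dH dH ℂ, IsState ρ → ptraceL (Γ.map ρ) = Ψ.map ρ) ∧
    (∀ ρ : Matrix dH dH ℂ, IsState ρ → ptraceR (Γ.map ρ) = Φ.map ρ)

/-- Compatibility of a POVM and an instrument: existence of a joint instrument `G`
with `∑ x, G.op (x, y) = J.op y` and whose induced POVM has the POVM `A` as a margin. -/
def POVMInsCompatible [Fintype Ω] [Fintype Λ] [Fintype dH] [DecidableEq dH] [Fintype dK]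
    (A : POVM Ω dH) (J : Instrument Λ dH dK) : Prop :=
  ∃ G : Instrument (Ω × Λ) dH dK,
    (∀ y, ∑ x, G.op (x, y) = J.op y) ∧
    (∀ x, ∑ y, dualId (G.op (x, y)) = A.elem x)

/-- Compatibility (joint measurability) of two POVMs. -/
def POVMCompatible [Fintype Ω] [Fintype Λ] [Fintype dH] [DecidableEq dH]
    (A : POVM Ω dH) (B : POVM Λ dH) : Prop :=
  ∃ G : POVM (Ω × Λ) dH,
    (∀ y, ∑ x, G.elem (x, y) = B.elem y) ∧
    (∀ x, ∑ y, G.elem (x, y) = A.elem x)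

/-- Compatibility of a POVM and a channel: existence of an instrument implementing both. -/
def POVMChCompatible [Fintype Ω] [Fintype dH] [DecidableEq dH] [Fintype dK]
    (A : POVM Ω dH) (Ψ : Channel dH dK) : Prop :=
  ∃ G : Instrument Ω dH dK,
    (∑ x, G.op x) = Ψ.map ∧ ∀ x, dualId (G.op x) = A.elem x

/-- Instrument postprocessing: `I ⪯ J` if `I_x = ∑ y, R^(y)_x ∘ J_y` for
a family of instruments `R^(y)`. -/
def Postprocessed [Fintype Ω] [Fintype Λ] [Fintype dH] [DecidableEq dH] [Fintype dK]
    [Fintype dV] [DecidableEq dV] (I : Instrument Ω dH dK) (J : Instrument Λ dH dV) : Prop :=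
  ∃ R : Λ → Instrument Ω dV dK, ∀ x, I.op x = ∑ y, (R y).op x ∘ₗ J.op y

/-- An instrument `I` does not disturb an instrument `J`: `J_y ∘ Φ^I = J_y`. -/
def NonDisturbs [Fintype Ω] [Fintype Λ] [Fintype dH] [DecidableEq dH] [Fintype dV]
    (I : Instrument Ω dH dH) (J : Instrument Λ dH dV) : Prop :=
  ∀ y, J.op y ∘ₗ (∑ x, I.op x) = J.op y

/-- An instrument `I` does not disturb a channel `Ψ`: `Ψ ∘ Φ^I = Ψ`. -/
def InsNonDisturbsCh [Fintype Ω] [Fintype dH] [DecidableEq dH] [Fintype dV]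
    (I : Instrument Ω dH dH) (Ψ : Channel dH dV) : Prop :=
  Ψ.map ∘ₗ (∑ x, I.op x) = Ψ.map

/-- An instrument `I` does not disturb a POVM `A`:
the statistics of `A` are unchanged by the channel induced by `I`. -/
def InsNonDisturbsPOVM [Fintype Ω] [Fintype Λ] [Fintype dH] [DecidableEq dH]
    (I : Instrument Ω dH dH) (A : POVM Λ dH) : Prop :=
  ∀ y, ∀ ρ : Matrix dH dH ℂ,
    (A.elem y * ((∑ x, I.op x) ρ)).trace = (A.elem y * ρ).trace

/-- A POVM `A` does not disturb an instrument `J`: some instrument measuring `A`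
does not disturb `J`. -/
def POVMNonDisturbs [Fintype Ω] [Fintype Λ] [Fintype dH] [DecidableEq dH] [Fintype dV]
    (A : POVM Ω dH) (J : Instrument Λ dH dV) : Prop :=
  ∃ I : Instrument Ω dH dH, (∀ x, dualId (I.op x) = A.elem x) ∧ NonDisturbs I J

/-- A POVM `A` does not disturb a channel `Ψ`. -/
def POVMNonDisturbsCh [Fintype Ω] [Fintype dH] [DecidableEq dH] [Fintype dV]
    (A : POVM Ω dH) (Ψ : Channel dH dV) : Prop :=
  ∃ I : Instrument Ω dH dH, (∀ x, dualId (I.op x) = A.elem x) ∧ InsNonDisturbsCh I Ψ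

/-- A POVM `A` does not disturb a POVM `B`. -/
def POVMNonDisturbsPOVM [Fintype Ω] [Fintype Λ] [Fintype dH] [DecidableEq dH]
    (A : POVM Ω dH) (B : POVM Λ dH) : Prop :=
  ∃ I : Instrument Ω dH dH, (∀ x, dualId (I.op x) = A.elem x) ∧ InsNonDisturbsPOVM I B

/-- A sharp (projection-valued) POVM. -/
def IsSharp [Fintype Ω] [Fintype dH] [DecidableEq dH] (A : POVM Ω dH) : Prop :=
  ∀ x, A.elem x * A.elem x = A.elem x

/-- `(H_A, W, E)` is a dilation of the instrument `I`:
`W` is an isometry `H → H_A ⊗ K` and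
`I_x(ρ) = Tr_{H_A}[W ρ W* (E(x) ⊗ 1_K)]` on all states. -/
def IsDilation [Fintype Ω] [Fintype dH] [DecidableEq dH] [Fintype dK] [DecidableEq dK]
    [Fintype dA] [DecidableEq dA] (I : Instrument Ω dH dK)
    (W : Matrix (dA × dK) dH ℂ) (E : POVM Ω dA) : Prop :=
  Wᴴ * W = 1 ∧
  ∀ x, ∀ ρ : Matrix dH dH ℂ, IsState ρ →
    I.op x ρ = ptraceL (W * ρ * Wᴴ * (E.elem x ⊗ₖ (1 : Matrix dK dK ℂ)))

/-- Minimality of a Stinespring isometry `W : H → H_A ⊗ K`: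
the span of `{(1 ⊗ B) W φ}` is everything. -/
def IsMinimalW [Fintype dH] [Fintype dK] [DecidableEq dK] [Fintype dA] [DecidableEq dA]
    (W : Matrix (dA × dK) dH ℂ) : Prop :=
  Submodule.span ℂ {v : (dA × dK) → ℂ |
    ∃ (B : Matrix dK dK ℂ) (φ : dH → ℂ),
      v = ((1 : Matrix dA dA ℂ) ⊗ₖ B) *ᵥ (W *ᵥ φ)} = ⊤

/-- `IC` is the complementary instrument of the instrument dilated by `(W, E)`:
`IC_x(ρ) = Tr_K[(√E(x) ⊗ 1) W ρ W* (√E(x) ⊗ 1)]`. -/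
def IsComplementaryOf [Fintype Ω] [Fintype dH] [DecidableEq dH] [Fintype dK]
    [DecidableEq dK] [Fintype dA] [DecidableEq dA] (W : Matrix (dA × dK) dH ℂ) (E : POVM Ω dA)
    (IC : Instrument Ω dH dA) : Prop :=
  ∀ x, ∀ ρ : Matrix dH dH ℂ,
    IC.op x ρ =
      ptraceR ((CFC.sqrt (E.elem x) ⊗ₖ (1 : Matrix dK dK ℂ)) * (W * ρ * Wᴴ) *
        (CFC.sqrt (E.elem x) ⊗ₖ (1 : Matrix dK dK ℂ)))

/-- A measure-and-prepare instrument: `I_x(ρ) = tr[A(x) ρ] ξ_x`. -/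
def IsMeasureAndPrepare [Fintype Ω] [Fintype dH] [DecidableEq dH] [Fintype dK]
    [DecidableEq dK] (I : Instrument Ω dH dK) : Prop :=
  ∃ (A : POVM Ω dH) (ξ : Ω → Matrix dK dK ℂ),
    (∀ x, IsState (ξ x)) ∧
    ∀ x, ∀ ρ : Matrix dH dH ℂ, I.op x ρ = ((A.elem x * ρ).trace) • ξ x

/-- A pure state: a state which is a (rank-one) projection. -/
def IsPureState [Fintype dK] (ρ : Matrix dK dK ℂ) : Prop :=
  IsState ρ ∧ ρ * ρ = ρ

/-- A rank-1 POVM: every effect has rank at most one. -/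
def IsRankOnePOVM [Fintype Ω] [Fintype dH] [DecidableEq dH] (A : POVM Ω dH) : Prop :=
  ∀ x, (A.elem x).rank ≤ 1

/-- POVM postprocessing: `B(y) = ∑ x, ν x y • A(x)` for a stochastic matrix `ν`. -/
def POVMPostprocessed [Fintype Ω] [Fintype Λ] [Fintype dH] [DecidableEq dH]
    (B : POVM Λ dH) (A : POVM Ω dH) : Prop :=
  ∃ ν : Ω → Λ → ℝ, (∀ x y, 0 ≤ ν x y) ∧ (∀ x, ∑ y, ν x y = 1) ∧
    ∀ y, B.elem y = ∑ x, (ν x y : ℂ) • A.elem x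

/-- A measure-and-prepare instrument preparing pure states. -/
def IsMeasureAndPreparePure [Fintype Ω] [Fintype dH] [DecidableEq dH] [Fintype dK]
    [DecidableEq dK] (I : Instrument Ω dH dK) : Prop :=
  ∃ (A : POVM Ω dH) (ξ : Ω → Matrix dK dK ℂ),
    (∀ x, IsPureState (ξ x)) ∧
    ∀ x, ∀ ρ : Matrix dH dH ℂ, I.op x ρ = ((A.elem x * ρ).trace) • ξ x

/-! Dividing the joint POVM `G(x, ·)` by `√A(x)` on both sides gives a POVM on the support of
`A(x)`: no mass is lost, because `0 ≤ G(x, y) ≤ A(x)` forces `G(x, y)` to vanish on the kernel of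
`A(x)`. On that kernel any POVM with outcomes in `Λ` may be put in; `B` itself serves. Conversely,
`√A(x) R⁽ˣ⁾(y) √A(x)` is a joint POVM, since summing out `y` leaves `√A(x) √A(x) = A(x)`. -/

section PosSemidef

variable {𝕜 n : Type*} [RCLike 𝕜] [Fintype n]

theorem mulVec_eq_zero_of_posSemidef_of_le {M N : Matrix n n 𝕜} (hM : M.PosSemidef)
    (hMN : M ≤ N) {v : n → 𝕜} (hv : N *ᵥ v = 0) : M *ᵥ v = 0 := by
  refine (hM.dotProduct_mulVec_zero_iff v).mp (le_antisymm ?_ (hM.dotProduct_mulVec_nonneg v))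
  simpa only [sub_mulVec, hv, zero_sub, dotProduct_neg, neg_nonneg] using
    (Matrix.le_iff.mp hMN).dotProduct_mulVec_nonneg v

theorem mul_mul_eq_self_of_posSemidef_of_le {M N P : Matrix n n 𝕜} (hM : M.PosSemidef)
    (hMN : M ≤ N) (hP : IsSelfAdjoint P) (hNP : N * P = N) : P * M * P = M := by
  have hMP : M * P = M := by
    refine mulVec_injective (funext fun v => ?_)
    have hker : N *ᵥ (P *ᵥ v - v) = 0 := by rw [mulVec_sub, mulVec_mulVec, hNP, sub_self]
    rw [← mulVec_mulVec, ← sub_eq_zero, ← mulVec_sub]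
    exact mulVec_eq_zero_of_posSemidef_of_le hM hMN hker
  have hPM : P * M = M := by
    simpa only [star_mul, hP.star_eq, hM.isHermitian.isSelfAdjoint.star_eq] using congrArg star hMP
  rw [hPM, hMP]

end PosSemidef

section HermitianPinv

variable {𝕜 n : Type*} [RCLike 𝕜] [Fintype n] [DecidableEq n]

/-- The Moore–Penrose pseudoinverse of a Hermitian matrix: it inverts the nonzero eigenvalues, and
keeps the zero ones because `0⁻¹ = 0` in `ℝ`. The junk value for a non-Hermitian matrix is `0`. -/
def hermitianPinv (S : Matrix n n 𝕜) : Matrix n n 𝕜 := cfc (fun x : ℝ => x⁻¹) S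

theorem isSelfAdjoint_hermitianPinv (S : Matrix n n 𝕜) : IsSelfAdjoint (hermitianPinv S) :=
  cfc_predicate _ S

theorem commute_hermitianPinv (S : Matrix n n 𝕜) : Commute S (hermitianPinv S) :=
  ((Commute.refl S).cfc_real _).symm

/-- The orthogonal projection onto the range of a Hermitian matrix, encoded as `S S⁺`
with `S⁺` its pseudoinverse. -/
def rangeProj (S : Matrix n n 𝕜) : Matrix n n 𝕜 := S * hermitianPinv S

theorem hermitianPinv_mul_self (S : Matrix n n 𝕜) : hermitianPinv S * S = rangeProj S :=
  (commute_hermitianPinv S).symm.eq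

variable {S : Matrix n n 𝕜}

theorem mul_hermitianPinv_mul_self (hS : IsSelfAdjoint S) : S * hermitianPinv S * S = S := by
  have hcont (f : ℝ → ℝ) : ContinuousOn f (spectrum ℝ S) := finite_real_spectrum.continuousOn f
  calc S * hermitianPinv S * S
      = cfc (fun x : ℝ => x * x⁻¹ * x) S := by
        rw [cfc_mul _ _ S (hcont _) (hcont _), cfc_mul _ _ S (hcont _) (hcont _), cfc_id' ℝ S,
          hermitianPinv]
    _ = S := by simp only [mul_inv_mul_cancel, cfc_id' ℝ S]

theorem self_mul_rangeProj (hS : IsSelfAdjoint S) : S * rangeProj S = S := by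
  rw [← hermitianPinv_mul_self, ← mul_assoc, mul_hermitianPinv_mul_self hS]

theorem isStarProjection_rangeProj (hS : IsSelfAdjoint S) : IsStarProjection (rangeProj S) where
  isIdempotentElem := by
    rw [IsIdempotentElem, rangeProj, ← mul_assoc, mul_hermitianPinv_mul_self hS]
  isSelfAdjoint :=
    (hS.commute_iff (isSelfAdjoint_hermitianPinv S)).mp (commute_hermitianPinv S)

end HermitianPinv

namespace POVM

variable {d : Type} [Fintype Λ] [Fintype d] [DecidableEq d]

section Normalize

variable {S : Matrix d d ℂ} {G : Λ → Matrix d d ℂ}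

/-- The POVM obtained by dividing a family `G` of positive semidefinite matrices with sum `S²`
by `S` on both sides, through the pseudoinverse of `S`. The divided family sums to the projection
onto the range of `S`; it is completed by the compression of an arbitrary POVM `C` to the kernel
of `S`. -/
def normalize (hS : IsSelfAdjoint S) (hG : ∀ y, (G y).PosSemidef) (hsum : ∑ y, G y = S * S)
    (C : POVM Λ d) : POVM Λ d where
  elem y := hermitianPinv S * G y * hermitianPinv S +
    (1 - rangeProj S) * C.elem y * (1 - rangeProj S)
  pos y := by
    have hQ := (isStarProjection_rangeProj hS).one_sub.isSelfAdjoint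
    exact .add ((isSelfAdjoint_hermitianPinv S).conjugate_nonneg (hG y).nonneg).posSemidef
      (hQ.conjugate_nonneg (C.pos y).nonneg).posSemidef
  sum_eq := by
    have hP := isStarProjection_rangeProj hS
    have hrange : hermitianPinv S * (S * S) * hermitianPinv S = rangeProj S := by
      rw [← mul_assoc, hermitianPinv_mul_self, mul_assoc, ← rangeProj, hP.isIdempotentElem.eq]
    rw [Finset.sum_add_distrib, ← Finset.sum_mul, ← Finset.mul_sum, ← Finset.sum_mul,
      ← Finset.mul_sum, hsum, C.sum_eq, mul_one, hrange, hP.one_sub.isIdempotentElem.eq,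
      add_sub_cancel]

theorem mul_normalize_elem_mul (hS : IsSelfAdjoint S) (hG : ∀ y, (G y).PosSemidef)
    (hsum : ∑ y, G y = S * S) (C : POVM Λ d) (y : Λ) :
    S * (normalize hS hG hsum C).elem y * S = G y := by
  have hle : G y ≤ S * S :=
    hsum ▸ Finset.single_le_sum (fun z _ => (hG z).nonneg) (Finset.mem_univ y)
  have hker : S * (1 - rangeProj S) = 0 := by
    rw [mul_sub, mul_one, self_mul_rangeProj hS, sub_self]
  calc S * (normalize hS hG hsum C).elem y * S
      = S * hermitianPinv S * G y * (hermitianPinv S * S) +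
          S * (1 - rangeProj S) * C.elem y * (1 - rangeProj S) * S := by
        simp only [normalize, mul_add, add_mul, mul_assoc]
    _ = rangeProj S * G y * rangeProj S := by
        rw [hker, zero_mul, zero_mul, zero_mul, add_zero, hermitianPinv_mul_self, ← rangeProj]
    _ = G y := by
        refine mul_mul_eq_self_of_posSemidef_of_le (hG y) hle
          (isStarProjection_rangeProj hS).isSelfAdjoint ?_
        rw [mul_assoc, self_mul_rangeProj hS]

end Normalize

theorem sum_sqrt_mul_elem_mul_sqrt {M : Matrix d d ℂ} (hM : M.PosSemidef) (R : POVM Λ d) :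
    ∑ y, CFC.sqrt M * R.elem y * CFC.sqrt M = M := by
  rw [← Finset.sum_mul, ← Finset.mul_sum, R.sum_eq, mul_one, CFC.sqrt_mul_sqrt_self M hM.nonneg]

/-- The sequential measurement which applies the Lüders instrument of `A` and then, upon outcome
`x`, measures `R x`. -/
def luders [Fintype Ω] (A : POVM Ω d) (R : Ω → POVM Λ d) : POVM (Ω × Λ) d where
  elem p := CFC.sqrt (A.elem p.1) * (R p.1).elem p.2 * CFC.sqrt (A.elem p.1)
  pos p := (conjugate_nonneg_of_nonneg ((R p.1).pos p.2).nonneg (CFC.sqrt_nonneg _)).posSemidef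
  sum_eq := by simp only [Fintype.sum_prod_type, sum_sqrt_mul_elem_mul_sqrt (A.pos _), A.sum_eq]

end POVM

/-- A POVM `B` is compatible with a POVM `A` if and only if there are
POVMs `R^(x)` with `B(y) = ∑ x, √A(x) R^(x)(y) √A(x)`. -/
theorem povm_compatible_iff_sqrt_decomposition
    [Fintype Ω] [Fintype Λ] [Fintype dH] [DecidableEq dH]
    (A : POVM Ω dH) (B : POVM Λ dH) :
    POVMCompatible A B ↔
      ∃ R : Ω → POVM Λ dH,
        ∀ y, B.elem y = ∑ x, CFC.sqrt (A.elem x) * (R x).elem y * CFC.sqrt (A.elem x) := by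
  constructor
  · rintro ⟨G, hB, hA⟩
    have hsqrt (x) : IsSelfAdjoint (CFC.sqrt (A.elem x)) := (CFC.sqrt_nonneg _).isSelfAdjoint
    have hsum (x) : ∑ y, G.elem (x, y) = CFC.sqrt (A.elem x) * CFC.sqrt (A.elem x) :=
      (hA x).trans (CFC.sqrt_mul_sqrt_self _ (A.pos x).nonneg).symm
    refine ⟨fun x => .normalize (hsqrt x) (fun y => G.pos (x, y)) (hsum x) B, fun y => ?_⟩
    simp only [POVM.mul_normalize_elem_mul, hB]
  · rintro ⟨R, hR⟩
    exact ⟨A.luders R, fun y => (hR y).symm, fun x => (R x).sum_sqrt_mul_elem_mul_sqrt (A.pos x)⟩
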